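/- Let P ⊆ ℝⁿ × ℝᵈ be a polytope such that the pair (P, p_x) has the PF-property. Then the number of facets of the polytope p_x(P) is at most the number of facets of the polytope P. -/

import Mathlib

open Set

/-- The dimension of a polytope: the dimension of the direction of its affine span. -/
noncomputable def polyDim {E : Type*} [AddCommGroup E] [Module ℝ E] (P : Set E) : ℕ :=
  Module.finrank ℝ (affineSpan ℝ P).direction

/-!
If the exposed face of `l` is maximal among the exposed faces of the functionals in a coset `l + V`,
then every functional in `V` that is constant on this face is constant on the whole polytope:
otherwise the supporting hyperplane could be tilted further. This has two consequences. Letting `V`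
consist of the functionals that are constant on `H ∪ {u}`, where `H` is a proper face of `P` and `u`
a point of `P` outside `H`, one finds a facet containing `H`: it spans `P` together with `u`.
Letting `V` consist of the functionals that factor through the projection `π`, one finds, under the
PF-property and for every functional `f`, a face `L` with `π(L) = π(P)` on which `f` is minimal in
each fibre of `π`.

Assign to each facet `G` of `π(P)` a facet of `P` containing `P ∩ π⁻¹(G)`. Suppose that `G` and `G'`
are both assigned to `F`, the face on which `f` is maximal, and take `L` for this `f`. The face
`π(F ∩ L)` of `π(P)` contains `G` and `G'`. If it were all of `π(P)`, then in each fibre the minimum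
of `f` would equal its maximum over `P`, so that `F = P`. Hence it is a proper face, and both facets
are equal to it.
-/

/-- `F` is a facet of the polytope `P`: a nonempty exposed face of dimension `dim P - 1`. -/
def IsFacet {E : Type*} [AddCommGroup E] [Module ℝ E] [TopologicalSpace E] (P F : Set E) : Prop :=
  IsExposed ℝ P F ∧ F.Nonempty ∧ polyDim F + 1 = polyDim P

/-- The projected faces property of a pair `(P, π)`, for an arbitrary continuous linear map `π` in
place of a coordinate projection. -/
def PFProperty {E X : Type*} [AddCommGroup E] [Module ℝ E] [TopologicalSpace E]
    [AddCommGroup X] [Module ℝ X] [TopologicalSpace X] (π : E →L[ℝ] X) (P : Set E) : Prop :=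
  ∀ F, IsExposed ℝ P F → IsExposed ℝ (π '' P) (π '' F)

section LinearAlgebra

lemma polyDim_eq_finrank_vectorSpan {E : Type*} [AddCommGroup E] [Module ℝ E] (P : Set E) :
    polyDim P = Module.finrank ℝ (vectorSpan ℝ P) := by
  rw [polyDim, direction_affineSpan]

lemma vectorSpan_le_ker_iff {𝕜 V W : Type*} [Ring 𝕜] [AddCommGroup V] [Module 𝕜 V]
    [AddCommGroup W] [Module 𝕜 W] {f : V →ₗ[𝕜] W} {s : Set V} {x₀ : V} (hx₀ : x₀ ∈ s) :
    vectorSpan 𝕜 s ≤ LinearMap.ker f ↔ ∀ x ∈ s, f x = f x₀ := by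
  rw [vectorSpan_eq_span_vsub_set_right 𝕜 hx₀, Submodule.span_le, image_subset_iff]
  simp [subset_def, sub_eq_zero]

lemma finiteDimensional_vectorSpan_convexHull {E : Type*} [AddCommGroup E] [Module ℝ E]
    {s : Set E} (hs : s.Finite) : FiniteDimensional ℝ (vectorSpan ℝ (convexHull ℝ s)) := by
  rw [← direction_affineSpan, affineSpan_convexHull]
  exact finiteDimensional_direction_affineSpan_of_finite ℝ hs

lemma exists_strongDual_le_ker_of_notMem {𝕜 V : Type*} [Field 𝕜] [TopologicalSpace 𝕜]
    [IsTopologicalRing 𝕜] [AddCommGroup V] [TopologicalSpace V] [Module 𝕜 V] [SeparatingDual 𝕜 V]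
    {W : Submodule 𝕜 V} [FiniteDimensional 𝕜 W] {v : V} (hv : v ∉ W) :
    ∃ m : StrongDual 𝕜 V, m v ≠ 0 ∧ W ≤ LinearMap.ker m.toLinearMap := by
  obtain ⟨f, hfv, hfW⟩ := Submodule.exists_le_ker_of_notMem hv
  let U := W ⊔ 𝕜 ∙ v
  obtain ⟨m, hm⟩ := SeparatingDual.dualMap_surjective_iff.2 U.subtype_injective (f.domRestrict U)
  have hmf {x : V} (hx : x ∈ U) : m x = f x := DFunLike.congr_fun hm ⟨x, hx⟩
  refine ⟨m, ?_, fun w hw ↦ ?_⟩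
  · rwa [hmf (Submodule.mem_sup_right (Submodule.mem_span_singleton_self v))]
  · exact (hmf (Submodule.mem_sup_left hw)).trans (hfW hw)

end LinearAlgebra

section ExposedFaces

lemma eq_convexHull_inter_of_isExtreme {𝕜 V : Type*} [Field 𝕜] [LinearOrder 𝕜]
    [IsStrictOrderedRing 𝕜] [AddCommGroup V] [Module 𝕜 V] {s F : Set V}
    (hF : IsExtreme 𝕜 (convexHull 𝕜 s) F) (hFconv : Convex 𝕜 F) : F = convexHull 𝕜 (s ∩ F) := by
  refine Subset.antisymm (fun x hx ↦ ?_) (convexHull_min inter_subset_right hFconv)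
  have hKF : convexHull 𝕜 (s ∩ F) ⊆ convexHull 𝕜 s := convexHull_mono inter_subset_left
  have hP : Convex 𝕜 (convexHull 𝕜 s) := convex_convexHull 𝕜 s
  have hdiff : Convex 𝕜 (convexHull 𝕜 s \ F) := hF.convex_sdiff hP
  have hconv : Convex 𝕜 (convexHull 𝕜 (s ∩ F) ∪ convexHull 𝕜 s \ F) := by
    rw [convex_iff_openSegment_subset]
    rintro y (hy | hy) z (hz | hz) w hw
    · exact .inl ((convex_convexHull 𝕜 (s ∩ F)).openSegment_subset hy hz hw)
    · exact .inr ⟨hP.openSegment_subset (hKF hy) hz.1 hw,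
        fun hwF ↦ hz.2 (hF.right_mem_of_mem_openSegment (hKF hy) hz.1 hwF hw)⟩
    · exact .inr ⟨hP.openSegment_subset hy.1 (hKF hz) hw,
        fun hwF ↦ hy.2 (hF.left_mem_of_mem_openSegment hy.1 (hKF hz) hwF hw)⟩
    · exact .inr (hdiff.openSegment_subset hy hz hw)
  have hs : s ⊆ convexHull 𝕜 (s ∩ F) ∪ convexHull 𝕜 s \ F := fun y hy ↦
    (em (y ∈ F)).imp (fun hyF ↦ subset_convexHull 𝕜 _ ⟨hy, hyF⟩)
      fun hyF ↦ ⟨subset_convexHull 𝕜 s hy, hyF⟩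
  exact (convexHull_min hs hconv (hF.subset hx)).resolve_right fun h ↦ h.2 hx

variable {E : Type*} [AddCommGroup E] [Module ℝ E] [TopologicalSpace E]
  {P F K : Set E} {l : StrongDual ℝ E} {x x₀ : E}

lemma mem_toExposed_iff_of_mem (hx₀ : x₀ ∈ l.toExposed P) :
    x ∈ l.toExposed P ↔ x ∈ P ∧ l x = l x₀ :=
  ⟨fun hx ↦ ⟨hx.1, (hx₀.2 x hx.1).antisymm (hx.2 x₀ hx₀.1)⟩,
    fun ⟨hxP, hx⟩ ↦ ⟨hxP, fun y hy ↦ hx ▸ hx₀.2 y hy⟩⟩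

lemma vectorSpan_toExposed_le_ker :
    vectorSpan ℝ (l.toExposed P) ≤ LinearMap.ker l.toLinearMap := by
  obtain hF | ⟨x₀, hx₀⟩ := (l.toExposed P).eq_empty_or_nonempty
  · simp [hF]
  · exact (vectorSpan_le_ker_iff hx₀).2 fun x hx ↦ ((mem_toExposed_iff_of_mem hx₀).1 hx).2

lemma isExposed_inter_preimage {X : Type*} [AddCommGroup X] [Module ℝ X] [TopologicalSpace X]
    (π : E →L[ℝ] X) {G : Set X} (hG : IsExposed ℝ (π '' P) G) : IsExposed ℝ P (P ∩ π ⁻¹' G) := by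
  rintro ⟨z, -, hz⟩
  obtain ⟨l, rfl⟩ := hG ⟨_, hz⟩
  refine ⟨l.comp π, ext fun x ↦ and_congr_right fun hx ↦ ?_⟩
  have hπx : π x ∈ π '' P := mem_image_of_mem π hx
  simp only [mem_preimage, mem_ofPred_eq, hπx, true_and, forall_mem_image,
    ContinuousLinearMap.comp_apply]

lemma eq_of_isExposed_of_vectorSpan_le (hF : IsExposed ℝ P F) (hne : F.Nonempty) (hFK : F ⊆ K)
    (hKP : K ⊆ P) (hspan : vectorSpan ℝ K ≤ vectorSpan ℝ F) : F = K := by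
  obtain ⟨l, rfl : F = l.toExposed P⟩ := hF hne
  obtain ⟨x₀, hx₀⟩ := hne
  have hl := (vectorSpan_le_ker_iff (hFK hx₀)).1 (hspan.trans vectorSpan_toExposed_le_ker)
  exact hFK.antisymm fun x hx ↦ (mem_toExposed_iff_of_mem hx₀).2 ⟨hKP hx, hl x hx⟩

lemma polyDim_lt_of_isExposed_of_ssubset [FiniteDimensional ℝ (vectorSpan ℝ K)]
    (hF : IsExposed ℝ P F) (hne : F.Nonempty) (hFK : F ⊂ K) (hKP : K ⊆ P) :
    polyDim F < polyDim K := by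
  simp only [polyDim_eq_finrank_vectorSpan]
  exact Submodule.finrank_lt_finrank_of_lt <| (vectorSpan_mono ℝ hFK.subset).lt_of_not_ge
    fun hspan ↦ hFK.ne (eq_of_isExposed_of_vectorSpan_le hF hne hFK.subset hKP hspan)

lemma IsFacet.ne (hF : IsFacet P F) : F ≠ P := by
  rintro rfl
  exact Nat.succ_ne_self _ hF.2.2

lemma IsFacet.eq_of_subset [FiniteDimensional ℝ (vectorSpan ℝ P)] (hF : IsFacet P F)
    (hK : IsExposed ℝ P K) (hFK : F ⊆ K) (hKP : K ≠ P) : F = K := by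
  obtain ⟨hFexp, hFne, hFdim⟩ := hF
  have : FiniteDimensional ℝ (vectorSpan ℝ K) :=
    Submodule.finiteDimensional_of_le (vectorSpan_mono ℝ hK.subset)
  have hlt := polyDim_lt_of_isExposed_of_ssubset hK (hFne.mono hFK) (hK.subset.ssubset_of_ne hKP)
    subset_rfl
  by_contra hne
  have := polyDim_lt_of_isExposed_of_ssubset hFexp hFne (hFK.ssubset_of_ne hne) hK.subset
  omega

end ExposedFaces

section Polytopes

variable {E : Type*} [AddCommGroup E] [Module ℝ E] [TopologicalSpace E]
  {s H : Set E} {l m : StrongDual ℝ E} {x x₀ : E}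

lemma exists_le_apply_of_mem_convexHull (l : StrongDual ℝ E) (hx : x ∈ convexHull ℝ s) :
    ∃ y ∈ s, l x ≤ l y :=
  (l.toLinearMap.convexOn (convex_convexHull ℝ s)).exists_ge_of_mem_convexHull
    (subset_convexHull ℝ s) hx

lemma mem_toExposed_convexHull_iff :
    x ∈ l.toExposed (convexHull ℝ s) ↔ x ∈ convexHull ℝ s ∧ ∀ y ∈ s, l y ≤ l x := by
  refine and_congr_right fun _ ↦ ⟨fun h y hy ↦ h y (subset_convexHull ℝ s hy), fun h y hy ↦ ?_⟩
  obtain ⟨z, hz, hyz⟩ := exists_le_apply_of_mem_convexHull l hy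
  exact hyz.trans (h z hz)

lemma toExposed_convexHull_nonempty (hs : s.Finite) (hne : s.Nonempty) :
    (l.toExposed (convexHull ℝ s)).Nonempty := by
  obtain ⟨x, hx, hmax⟩ := exists_max_image s l hs hne
  exact ⟨x, mem_toExposed_convexHull_iff.2 ⟨subset_convexHull ℝ s hx, hmax⟩⟩

lemma finite_setOf_isExposed_convexHull (hs : s.Finite) :
    {F | IsExposed ℝ (convexHull ℝ s) F}.Finite := by
  refine (hs.finite_subsets.image (convexHull ℝ)).subset fun F hF ↦ ?_
  exact ⟨s ∩ F, inter_subset_left,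
    (eq_convexHull_inter_of_isExtreme hF.isExtreme (hF.convex (convex_convexHull ℝ s))).symm⟩

lemma exists_toExposed_ssubset_of_lt (hs : s.Finite) (hx₀ : x₀ ∈ l.toExposed (convexHull ℝ s))
    (hm : ∀ x ∈ l.toExposed (convexHull ℝ s), m x = m x₀) {y : E} (hy : y ∈ convexHull ℝ s)
    (hlt : m x₀ < m y) :
    ∃ t : ℝ, l.toExposed (convexHull ℝ s) ⊂ (l + t • m).toExposed (convexHull ℝ s) := by
  have hsub := subset_convexHull ℝ s
  -- Tilt the supporting hyperplane of `l` about the face until it first meets a point of `s` at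
  -- which `m` exceeds `m x₀`; `t` is the tilt at which this happens.
  obtain ⟨z, ⟨hzs, hz⟩, hmin⟩ :
      ∃ z ∈ {z ∈ s | m x₀ < m z}, ∀ x ∈ {z ∈ s | m x₀ < m z},
        (l x₀ - l z) / (m z - m x₀) ≤ (l x₀ - l x) / (m x - m x₀) := by
    obtain ⟨z, hz, hyz⟩ := exists_le_apply_of_mem_convexHull m hy
    exact exists_min_image _ _ (hs.subset (sep_subset _ _)) ⟨z, hz, hlt.trans_le hyz⟩
  set t := (l x₀ - l z) / (m z - m x₀)
  have ht₀ : 0 ≤ t := div_nonneg (sub_nonneg.2 (hx₀.2 z (hsub hzs))) (sub_pos.2 hz).le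
  have hx₀' : x₀ ∈ (l + t • m).toExposed (convexHull ℝ s) := by
    refine mem_toExposed_convexHull_iff.2 ⟨hx₀.1, fun x hx ↦ ?_⟩
    suffices t * (m x - m x₀) ≤ l x₀ - l x by
      simp only [add_apply, smul_apply, smul_eq_mul]
      linarith
    obtain hxm | hxm := lt_or_ge (m x₀) (m x)
    · exact (le_div_iff₀ (sub_pos.2 hxm)).1 (hmin x ⟨hx, hxm⟩)
    · exact (mul_nonpos_of_nonneg_of_nonpos ht₀ (sub_nonpos.2 hxm)).trans
        (sub_nonneg.2 (hx₀.2 x (hsub hx)))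
  refine ⟨t, ssubset_of_subset_not_subset (fun x hx ↦ ?_) fun hle ↦ ?_⟩
  · rw [mem_toExposed_iff_of_mem hx₀']
    simp [hx.1, hm x hx, ((mem_toExposed_iff_of_mem hx₀).1 hx).2]
  · have hzF : z ∈ (l + t • m).toExposed (convexHull ℝ s) := by
      rw [mem_toExposed_iff_of_mem hx₀']
      have htz : t * (m z - m x₀) = l x₀ - l z := div_mul_cancel₀ _ (sub_pos.2 hz).ne'
      simp only [add_apply, smul_apply, smul_eq_mul]
      exact ⟨hsub hzs, by linarith⟩
    exact hz.ne' (hm z (hle hzF))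

lemma exists_toExposed_ssubset (hs : s.Finite)
    (hF : vectorSpan ℝ (l.toExposed (convexHull ℝ s)) ≤ LinearMap.ker m.toLinearMap)
    (hP : ¬ vectorSpan ℝ (convexHull ℝ s) ≤ LinearMap.ker m.toLinearMap) :
    ∃ t : ℝ, l.toExposed (convexHull ℝ s) ⊂ (l + t • m).toExposed (convexHull ℝ s) := by
  have hsne : s.Nonempty := nonempty_iff_ne_empty.2 fun h ↦ hP (by simp [h])
  obtain ⟨x₀, hx₀⟩ := toExposed_convexHull_nonempty (l := l) hs hsne
  rw [vectorSpan_le_ker_iff hx₀] at hF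
  rw [vectorSpan_le_ker_iff hx₀.1] at hP
  push Not at hP
  obtain ⟨y, hy, hne⟩ := hP
  obtain hlt | hlt := hne.lt_or_gt
  · obtain ⟨t, ht⟩ := exists_toExposed_ssubset_of_lt (m := -m) hs hx₀
      (fun x hx ↦ congrArg Neg.neg (hF x hx)) hy (neg_lt_neg hlt)
    have hneg : -t • m = t • -m := by ext; simp
    exact ⟨-t, hneg ▸ ht⟩
  · exact exists_toExposed_ssubset_of_lt hs hx₀ hF hy hlt

lemma exists_mem_forall_vectorSpan_le_ker (hs : s.Finite) (l : StrongDual ℝ E)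
    (V : Submodule ℝ (StrongDual ℝ E)) :
    ∃ v ∈ V, l.toExposed (convexHull ℝ s) ⊆ (l + v).toExposed (convexHull ℝ s) ∧
      ∀ m ∈ V, vectorSpan ℝ ((l + v).toExposed (convexHull ℝ s)) ≤ LinearMap.ker m.toLinearMap →
        vectorSpan ℝ (convexHull ℝ s) ≤ LinearMap.ker m.toLinearMap := by
  let 𝓕 : Set (Set E) := {F | ∃ v ∈ V, (l + v).toExposed (convexHull ℝ s) = F}
  have h𝓕 : 𝓕.Finite := (finite_setOf_isExposed_convexHull hs).subset <| by
    rintro _ ⟨v, -, rfl⟩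
    exact ContinuousLinearMap.toExposed.isExposed
  obtain ⟨_, hle, ⟨v, hv, rfl⟩, hmax⟩ := h𝓕.exists_le_maximal ⟨0, V.zero_mem, by rw [add_zero]⟩
  refine ⟨v, hv, hle, fun m hm hF ↦ ?_⟩
  by_contra hP
  obtain ⟨t, ht⟩ := exists_toExposed_ssubset hs hF hP
  rw [add_assoc] at ht
  exact ht.not_subset (hmax ⟨_, V.add_mem hv (V.smul_mem t hm), rfl⟩ ht.subset)

lemma exists_isFacet_superset [SeparatingDual ℝ E] (hs : s.Finite)
    (hH : IsExposed ℝ (convexHull ℝ s) H) (hne : H.Nonempty) (hHP : H ≠ convexHull ℝ s) :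
    ∃ F, IsFacet (convexHull ℝ s) F ∧ H ⊆ F := by
  obtain ⟨u, huP, huH⟩ := exists_of_ssubset (hH.subset.ssubset_of_ne hHP)
  obtain ⟨l, rfl : H = l.toExposed _⟩ := hH hne
  obtain ⟨x₀, hx₀⟩ := hne
  obtain ⟨v, hv, hHF, hmax⟩ := exists_mem_forall_vectorSpan_le_ker hs l
    (StrongDual.polarSubmodule ℝ (vectorSpan ℝ (insert u (l.toExposed (convexHull ℝ s)))))
  set F := (l + v).toExposed (convexHull ℝ s)
  have hF : IsExposed ℝ (convexHull ℝ s) F := ContinuousLinearMap.toExposed.isExposed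
  have := finiteDimensional_vectorSpan_convexHull hs
  have huF : u ∉ F := by
    have hvu : v u = v x₀ :=
      (vectorSpan_le_ker_iff (f := v.toLinearMap) (mem_insert_of_mem u hx₀)).1
        ((StrongDual.mem_polarSubmodule ..).1 hv) u (mem_insert u _)
    intro hu
    have hlvu : (l + v) u = (l + v) x₀ := ((mem_toExposed_iff_of_mem (hHF hx₀)).1 hu).2
    exact huH ((mem_toExposed_iff_of_mem hx₀).2 ⟨huP, by simpa [hvu] using hlvu⟩)
  have hFP : F ⊂ convexHull ℝ s := hF.subset.ssubset_of_ne fun h ↦ huF (h ▸ huP)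
  have : FiniteDimensional ℝ (vectorSpan ℝ (insert u F)) := Submodule.finiteDimensional_of_le
    (vectorSpan_mono ℝ (insert_subset huP hF.subset))
  have hspan : vectorSpan ℝ (convexHull ℝ s) ≤ vectorSpan ℝ (insert u F) := by
    intro w hw
    by_contra hwF
    obtain ⟨m, hmw, hm⟩ := exists_strongDual_le_ker_of_notMem hwF
    refine hmw (hmax m ?_ ((vectorSpan_mono ℝ (subset_insert u F)).trans hm) hw)
    exact (StrongDual.mem_polarSubmodule ..).2
      ((vectorSpan_mono ℝ (insert_subset_insert hHF)).trans hm)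
  have hle : polyDim (convexHull ℝ s) ≤ polyDim F + 1 := by
    simp only [polyDim_eq_finrank_vectorSpan]
    exact (Submodule.finrank_mono hspan).trans (finrank_vectorSpan_insert_le_set ℝ F u)
  have hlt := polyDim_lt_of_isExposed_of_ssubset hF ⟨x₀, hHF hx₀⟩ hFP subset_rfl
  exact ⟨F, ⟨hF, ⟨x₀, hHF hx₀⟩, by omega⟩, hHF⟩

end Polytopes

section Projection

variable {E X : Type*} [AddCommGroup E] [Module ℝ E] [TopologicalSpace E]
  [AddCommGroup X] [Module ℝ X] [TopologicalSpace X] {π : E →L[ℝ] X} {s F : Set E} {G G' : Set X}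

lemma PFProperty.exists_fiberwise_isMinOn (hs : s.Finite) (hPF : PFProperty π (convexHull ℝ s))
    (f : StrongDual ℝ E) :
    ∃ L, IsExposed ℝ (convexHull ℝ s) L ∧ π '' L = π '' convexHull ℝ s ∧
      ∀ z ∈ L, IsMinOn f (convexHull ℝ s ∩ π ⁻¹' {π z}) z := by
  obtain rfl | hne := s.eq_empty_or_nonempty
  · exact ⟨∅, isExposed_empty, by simp, by simp⟩
  obtain ⟨_, ⟨g, rfl⟩, -, hmax⟩ := exists_mem_forall_vectorSpan_le_ker hs (-f)
    (LinearMap.range (ContinuousLinearMap.lcomp ℝ π))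
  rw [ContinuousLinearMap.lcomp_apply] at hmax
  set L := (-f + g.comp π).toExposed (convexHull ℝ s)
  obtain ⟨x₀, hx₀⟩ : L.Nonempty := toExposed_convexHull_nonempty hs hne
  have hL : IsExposed ℝ (convexHull ℝ s) L := ContinuousLinearMap.toExposed.isExposed
  obtain ⟨k, hk : π '' L = k.toExposed (π '' convexHull ℝ s)⟩ := hPF L hL ⟨_, x₀, hx₀, rfl⟩
  have hkL {x : E} (hx : x ∈ L) : π x ∈ k.toExposed (π '' convexHull ℝ s) :=
    hk ▸ mem_image_of_mem π hx
  have hkconst : ∀ x ∈ convexHull ℝ s, k (π x) = k (π x₀) := by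
    refine (vectorSpan_le_ker_iff (f := (k.comp π).toLinearMap) hx₀.1).1 (hmax _ ⟨k, rfl⟩ ?_)
    exact (vectorSpan_le_ker_iff hx₀).2 fun x hx ↦
      ((mem_toExposed_iff_of_mem (hkL hx₀)).1 (hkL hx)).2
  refine ⟨L, hL, (image_mono hL.subset).antisymm ?_, fun z hz z' hz' ↦ ?_⟩
  · rintro _ ⟨x, hx, rfl⟩
    rw [hk, mem_toExposed_iff_of_mem (hkL hx₀)]
    exact ⟨mem_image_of_mem π hx, hkconst x hx⟩
  · have hπ : π z' = π z := hz'.2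
    have hle : -f z' + g (π z') ≤ -f z + g (π z) := hz.2 z' hz'.1
    rw [hπ] at hle
    exact neg_le_neg_iff.1 (le_of_add_le_add_right hle)

lemma PFProperty.eq_of_inter_preimage_subset (hs : s.Finite) (hPF : PFProperty π (convexHull ℝ s))
    (hG : IsFacet (π '' convexHull ℝ s) G) (hG' : IsFacet (π '' convexHull ℝ s) G')
    (hF : IsExposed ℝ (convexHull ℝ s) F) (hFP : F ≠ convexHull ℝ s)
    (hGF : convexHull ℝ s ∩ π ⁻¹' G ⊆ F) (hGF' : convexHull ℝ s ∩ π ⁻¹' G' ⊆ F) : G = G' := by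
  have : FiniteDimensional ℝ (vectorSpan ℝ (π '' convexHull ℝ s)) := by
    rw [← π.coe_coe, LinearMap.image_convexHull]
    exact finiteDimensional_vectorSpan_convexHull (hs.image π)
  have hFne : F.Nonempty := by
    obtain ⟨y, hy⟩ := hG.2.1
    obtain ⟨z, hz, rfl⟩ := hG.1.subset hy
    exact ⟨z, hGF ⟨hz, hy⟩⟩
  obtain ⟨f, rfl : F = f.toExposed _⟩ := hF hFne
  obtain ⟨L, hL, hLπ, hmin⟩ := hPF.exists_fiberwise_isMinOn hs f
  set F := f.toExposed (convexHull ℝ s)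
  have hK : IsExposed ℝ (π '' convexHull ℝ s) (π '' (F ∩ L)) := hPF _ (hF.inter hL)
  have hKne : π '' (F ∩ L) ≠ π '' convexHull ℝ s := by
    refine fun hKP ↦ hFP (hF.subset.antisymm fun z hz ↦ ?_)
    obtain ⟨y, ⟨hyF, hyL⟩, hyz⟩ : π z ∈ π '' (F ∩ L) := hKP ▸ mem_image_of_mem π hz
    exact ⟨hz, fun w hw ↦ (hyF.2 w hw).trans (hmin y hyL ⟨hz, hyz.symm⟩)⟩
  have subset_K {A : Set X} (hA : IsFacet (π '' convexHull ℝ s) A)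
      (hAF : convexHull ℝ s ∩ π ⁻¹' A ⊆ F) : A ⊆ π '' (F ∩ L) := by
    intro y hy
    obtain ⟨z, hz, rfl⟩ : y ∈ π '' L := hLπ ▸ hA.1.subset hy
    exact ⟨z, ⟨hAF ⟨hL.subset hz, hy⟩, hz⟩, rfl⟩
  exact (hG.eq_of_subset hK (subset_K hG hGF) hKne).trans
    (hG'.eq_of_subset hK (subset_K hG' hGF') hKne).symm

lemma IsFacet.exists_isFacet_inter_preimage_subset [SeparatingDual ℝ E] (hs : s.Finite)
    (hG : IsFacet (π '' convexHull ℝ s) G) :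
    ∃ F, IsFacet (convexHull ℝ s) F ∧ convexHull ℝ s ∩ π ⁻¹' G ⊆ F := by
  refine exists_isFacet_superset hs (isExposed_inter_preimage π hG.1) ?_ fun h ↦ hG.ne ?_
  · obtain ⟨y, hy⟩ := hG.2.1
    obtain ⟨z, hz, rfl⟩ := hG.1.subset hy
    exact ⟨z, hz, hy⟩
  · exact hG.1.subset.antisymm (image_subset_iff.2 (inter_eq_left.1 h))

end Projection

theorem pf_property_facet_count_general {E X : Type*}
    [AddCommGroup E] [Module ℝ E] [TopologicalSpace E] [SeparatingDual ℝ E]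
    [AddCommGroup X] [Module ℝ X] [TopologicalSpace X] (π : E →L[ℝ] X) {s : Set E} (hs : s.Finite)
    (hPF : PFProperty π (convexHull ℝ s)) :
    {G | IsFacet (π '' convexHull ℝ s) G}.ncard ≤ {F | IsFacet (convexHull ℝ s) F}.ncard := by
  choose! φ hφ hφG using fun G (hG : IsFacet (π '' convexHull ℝ s) G) ↦
    hG.exists_isFacet_inter_preimage_subset hs
  refine ncard_le_ncard_of_injOn φ hφ (fun G hG G' hG' hGG' ↦ ?_)
    ((finite_setOf_isExposed_convexHull hs).subset fun F hF ↦ hF.1)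
  exact hPF.eq_of_inter_preimage_subset hs hG hG' (hφ G hG).1 (hφ G hG).ne (hφG G hG)
    (hGG' ▸ hφG G' hG')

/-- If the pair `(P, p_x)` has the PF-property, then the number of facets (nonempty faces of
dimension one less than the dimension of the polytope) of the polytope `p_x(P)` is at most the
number of facets of the polytope `P`. -/
theorem pf_property_facet_count {n d : ℕ}
    (P : Set ((Fin n → ℝ) × (Fin d → ℝ)))
    (hP : ∃ s : Set ((Fin n → ℝ) × (Fin d → ℝ)), s.Finite ∧ P = convexHull ℝ s)
    (hPF : ∀ F : Set ((Fin n → ℝ) × (Fin d → ℝ)),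
        IsExposed ℝ P F → IsExposed ℝ (Prod.fst '' P) (Prod.fst '' F)) :
    {G : Set (Fin n → ℝ) |
        IsExposed ℝ (Prod.fst '' P) G ∧ G.Nonempty ∧
          polyDim G + 1 = polyDim (Prod.fst '' P)}.ncard ≤
      {F : Set ((Fin n → ℝ) × (Fin d → ℝ)) |
        IsExposed ℝ P F ∧ F.Nonempty ∧ polyDim F + 1 = polyDim P}.ncard := by
  obtain ⟨s, hs, rfl⟩ := hP
  exact pf_property_facet_count_general (.fst ℝ (Fin n → ℝ) (Fin d → ℝ)) hs hPF
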